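/- arXiv:2002.11292 — 3 statements merged into one kernel-verified Lean document; each statement's English description precedes it below -/
import Mathlib

section
/- Let f : M³ → A be a G-invariant A-multilinear map. Then the birack 2-cocycle Φ_f := f ∘ ψ₂ ∘ γ₂ : C^{BR}_2(X;ℤ)_X → A of the G-Alexander biquandle X with X-set X satisfies Φ_f((m₀,g₀),(m₁,g₁),(m₂,g₂)) = f((m₀−m₁) − (m₀−m₁)·(φ(g₁)⁻¹g₁), m₁ − m₂, m₂ − m₂·(φ(g₂)g₂⁻¹)) for all m₀,m₁,m₂ ∈ M and g₀,g₁,g₂ ∈ G. -/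
open FreeAbelianGroup
open scoped TensorProduct

namespace GAlex

variable {G M A : Type*} [Group G] [AddCommGroup M] [DistribMulAction Gᵐᵒᵖ M] [AddCommGroup A]

/-- The right action `m · g` of a group element `g : G` on `m : M`
(coming from the right `ℤ[G]`-module structure on `M`). -/
def ract (m : M) (g : G) : M := MulOpposite.op g • m

variable (φ : G →* G)

/-- The operation `(m,g) ⊳ (n,h) = (mh + n(φ(h) − h), h⁻¹gh)` of the `G`-Alexander biquandle. -/
def under (x y : M × G) : M × G :=
  (ract x.1 y.2 + ract y.1 (φ y.2) - ract y.1 y.2, y.2⁻¹ * x.2 * y.2)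

/-- The operation `(m,g) ⊚ (n,h) = (mφ(h), g)` of the `G`-Alexander biquandle. -/
def overOp (x y : M × G) : M × G := (ract x.1 (φ y.2), x.2)

/-- The face `g_{⟨p⟩}` (delete the `p`-th entry). -/
def dGdel (n : ℕ) (p : Fin (n + 1)) (g : Fin (n + 1) → G) : Fin n → G :=
  fun j => g (p.succAbove j)

/-- The face `g_{⟨⊲p⟩}` (conjugate the first entries by `g p` and delete the `p`-th entry). -/
def dGconj (n : ℕ) (p : Fin (n + 1)) (g : Fin (n + 1) → G) : Fin n → G :=
  fun j => if (j : ℕ) < (p : ℕ) then (g p)⁻¹ * g j.castSucc * g p else g j.succ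

/-- The face `m_{⟨p⟩}` (merge the two entries adjacent to position `p`;
for `p = 0` drop the first entry). -/
def dMmer (n : ℕ) (p : Fin (n + 1)) (m : Fin (n + 1) → M) : Fin n → M :=
  fun j =>
    if (j : ℕ) + 1 < (p : ℕ) then m j.castSucc
    else if (j : ℕ) + 1 = (p : ℕ) then m j.castSucc + m j.succ
    else m j.succ

/-- The face `m_{⟨⊲p⟩}`. -/
def dMconj (n : ℕ) (p : Fin (n + 1)) (g : Fin (n + 1) → G) (m : Fin (n + 1) → M) : Fin n → M :=
  fun j =>
    if (j : ℕ) + 1 < (p : ℕ) then ract (m j.castSucc) (g p)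
    else if (j : ℕ) + 1 = (p : ℕ) then ract (m j.castSucc) (g p) + ract (m j.succ) (φ (g p))
    else ract (m j.succ) (φ (g p))

/-- The boundary map `∂^{BR_U}_{n+1} : C^{BR_U}_{n+1}(X;ℤ) → C^{BR_U}_n(X;ℤ)`
(the boundary `∂^{BR_U}_k` is `0` for `k ≤ 1`, which agrees with this formula at `n = 0`). -/
def dBRU (n : ℕ) :
    FreeAbelianGroup ((Fin (n + 1) → G) × (Fin (n + 1) → M)) →+
      FreeAbelianGroup ((Fin n → G) × (Fin n → M)) :=
  FreeAbelianGroup.lift fun x =>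
    ∑ p : Fin (n + 1),
      (-1 : ℤ) ^ (p : ℕ) •
        (FreeAbelianGroup.of (dGdel n p x.1, dMmer n p x.2) -
          FreeAbelianGroup.of (dGconj n p x.1, dMconj φ n p x.1 x.2))

/-- The birack boundary map `∂^{BR}_{n+1} : C^{BR}_{n+1}(X;ℤ) → C^{BR}_n(X;ℤ)`
for the `G`-Alexander biquandle `X = M × G` (with trivial `X`-set). -/
def dBR (n : ℕ) :
    FreeAbelianGroup (Fin (n + 1) → M × G) →+ FreeAbelianGroup (Fin n → M × G) :=
  FreeAbelianGroup.lift fun x =>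
    ∑ p : Fin (n + 1),
      (-1 : ℤ) ^ (p : ℕ) •
        (FreeAbelianGroup.of (fun j => x (p.succAbove j)) -
          FreeAbelianGroup.of (fun j : Fin n =>
            if (j : ℕ) < (p : ℕ) then under φ (x j.castSucc) (x p)
            else overOp φ (x j.succ) (x p)))

/-- `γ_n((m₁,g₁),…,(m_n,g_n)) = (g₁,…,g_n; m₁−m₂, …, m_{n−1}−m_n, m_n)`. -/
def gammaMap (n : ℕ) :
    FreeAbelianGroup (Fin n → M × G) →+ FreeAbelianGroup ((Fin n → G) × (Fin n → M)) :=
  FreeAbelianGroup.lift fun x =>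
    FreeAbelianGroup.of
      (fun j => (x j).2,
       fun j => (x j).1 - if h : (j : ℕ) + 1 < n then (x ⟨(j : ℕ) + 1, h⟩).1 else 0)

/-- `r_n(g₁,…,g_n; m₁,…,m_n) = ((m₁+⋯+m_n, g₁), (m₂+⋯+m_n, g₂), …, (m_n, g_n))`. -/
def rMap (n : ℕ) :
    FreeAbelianGroup ((Fin n → G) × (Fin n → M)) →+ FreeAbelianGroup (Fin n → M × G) :=
  FreeAbelianGroup.lift fun p =>
    FreeAbelianGroup.of fun j => ((∑ i ∈ Finset.Ici j, p.2 i), p.1 j)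

/-- The boundary map `∂^{BR_U}_{d+1}` of `C^{BR_U}_*(X;ℤ)_X` (the version with `X`-set `X`,
whose degree-`d` chain group is free on `(1+d)`-tuples); it is `0` in degrees `≤ 1`. -/
def dBRUX : (d : ℕ) →
    FreeAbelianGroup ((Fin (d + 2) → G) × (Fin (d + 2) → M)) →+
      FreeAbelianGroup ((Fin (d + 1) → G) × (Fin (d + 1) → M))
  | 0 => 0
  | d + 1 =>
    FreeAbelianGroup.lift fun x =>
      ∑ i : Fin (d + 2),
        (-1 : ℤ) ^ (i : ℕ) •
          (FreeAbelianGroup.of (dGdel (d + 2) i.succ x.1, dMmer (d + 2) i.succ x.2) -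
            FreeAbelianGroup.of (dGconj (d + 2) i.succ x.1, dMconj φ (d + 2) i.succ x.1 x.2))

/-- The boundary map `∂^{BR}_{d+1}` of `C^{BR}_*(X;ℤ)_X` (the version with `X`-set `X`);
it is `0` in degrees `≤ 1`. -/
def dBRX : (d : ℕ) →
    FreeAbelianGroup (Fin (d + 2) → M × G) →+ FreeAbelianGroup (Fin (d + 1) → M × G)
  | 0 => 0
  | d + 1 =>
    FreeAbelianGroup.lift fun x =>
      ∑ i : Fin (d + 2),
        (-1 : ℤ) ^ (i : ℕ) •
          (FreeAbelianGroup.of (fun j => x (i.succ.succAbove j)) -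
            FreeAbelianGroup.of (fun j : Fin (d + 2) =>
              if (j : ℕ) < (i : ℕ) + 1 then under φ (x j.castSucc) (x i.succ)
              else overOp φ (x j.succ) (x i.succ)))


/-- The subgroup of `G`-coinvariants relations in `C^{gp}_n(M;ℤ)`:
generated by all `(m₁g,…,m_ng) − (m₁,…,m_n)`. -/
def coinvSub (n : ℕ) : AddSubgroup (FreeAbelianGroup (Fin n → M)) :=
  AddSubgroup.closure
    {z | ∃ (m : Fin n → M) (g : G),
        z = FreeAbelianGroup.of (fun i => ract (m i) g) - FreeAbelianGroup.of m}

/-- The coinvariant group chain group `C^{gp}_n(M;ℤ)_G`. -/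
abbrev CgpG (n : ℕ) : Type _ :=
  FreeAbelianGroup (Fin n → M) ⧸ coinvSub (G := G) (M := M) n

/-- The group-homology boundary map `∂^{gp}_{n+1} : C^{gp}_{n+1}(M;ℤ) → C^{gp}_n(M;ℤ)`
(it is `0` in degrees `≤ 1`, which agrees with this formula at `n = 0`). -/
def dgp (n : ℕ) :
    FreeAbelianGroup (Fin (n + 1) → M) →+ FreeAbelianGroup (Fin n → M) :=
  FreeAbelianGroup.lift fun m =>
    (∑ p : Fin (n + 1), (-1 : ℤ) ^ (p : ℕ) • FreeAbelianGroup.of (dMmer n p m)) +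
      (-1 : ℤ) ^ (n + 1) • FreeAbelianGroup.of fun j : Fin n => m j.castSucc

/-- `|k| = k₁ + ⋯ + k_n`. -/
def wt {n : ℕ} (k : Fin n → Bool) : ℕ := ∑ i, if k i then 1 else 0

/-- `g_{k,i} = φ(g₀^{k₀} ⋯ g_i^{k_i}) · g_{i+1}^{k_{i+1}} ⋯ g_{n-1}^{k_{n-1}}`
(indices written `0`-based; the products are ordered). -/
def gki {n : ℕ} (g : Fin n → G) (k : Fin n → Bool) (i : Fin n) : G :=
  φ ((((List.finRange n).filter fun j => decide (j ≤ i)).map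
        fun j => if k j then g j else 1).prod) *
    (((List.finRange n).filter fun j => decide (i < j)).map
        fun j => if k j then g j else 1).prod

/-- The value of `ψ` on a generator:
`Σ_{k, k₀ = 0} (−1)^{|k|} (m₀ g_{k,0}, …, m_n g_{k,n})`, as an element of the free
abelian group (before passing to coinvariants). -/
def psiVal (n : ℕ) (x : (Fin (n + 1) → G) × (Fin (n + 1) → M)) :
    FreeAbelianGroup (Fin (n + 1) → M) :=
  ∑ k ∈ Finset.univ.filter fun k : Fin (n + 1) → Bool => k 0 = false,
    (-1 : ℤ) ^ wt k • FreeAbelianGroup.of fun i => ract (x.2 i) (gki φ x.1 k i)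

/-- `ψ` as a homomorphism into the free abelian group (before coinvariants). -/
def psiFree (n : ℕ) :
    FreeAbelianGroup ((Fin (n + 1) → G) × (Fin (n + 1) → M)) →+
      FreeAbelianGroup (Fin (n + 1) → M) :=
  FreeAbelianGroup.lift (psiVal φ n)

/-- The homomorphism `ψ : C^{BR_U} → C^{gp}(M;ℤ)_G`. -/
def psiG (n : ℕ) :
    FreeAbelianGroup ((Fin (n + 1) → G) × (Fin (n + 1) → M)) →+
      CgpG (G := G) (M := M) (n + 1) :=
  (QuotientAddGroup.mk' (coinvSub (G := G) (M := M) (n + 1))).comp (psiFree φ n)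

/-- The homomorphism `ψ_{•,λ}`, sending a generator `x` to `ψ(x) ⊗ λ(x₁)` where `x₁` is the
first `G`-entry of `x`. -/
noncomputable def psiLam (lam : G → A) (n : ℕ) :
    FreeAbelianGroup ((Fin (n + 1) → G) × (Fin (n + 1) → M)) →+
      TensorProduct ℤ (CgpG (G := G) (M := M) (n + 1)) A :=
  FreeAbelianGroup.lift fun x =>
    (QuotientAddGroup.mk' (coinvSub (G := G) (M := M) (n + 1)) (psiVal φ n x)) ⊗ₜ[ℤ]
      lam (x.1 0)

/-- `D^{gp}_n(M;ℤ)_G`: the image in the coinvariants of the subgroup generated by tuples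
with a vanishing entry in a position `1 ≤ i ≤ n−1`. -/
def DgpGsub (n : ℕ) : AddSubgroup (CgpG (G := G) (M := M) n) :=
  (AddSubgroup.closure
      {z : FreeAbelianGroup (Fin n → M) |
        ∃ (m : Fin n → M) (i : Fin n),
          (i : ℕ) + 1 < n ∧ m i = 0 ∧ z = FreeAbelianGroup.of m}).map
    (QuotientAddGroup.mk' (coinvSub (G := G) (M := M) n))

/-! By invariance the middle argument can be freed of its group element. With `x ∈ {1, g₁}`,
`y ∈ {1, g₂}` and `φ` central, this turns the term `f (m₀xy, m₁φ(x)y, m₂φ(xy))` of `f ∘ ψ₂` into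
`f (m₀(φ(x)⁻¹x), m₁, m₂(φ(y)y⁻¹))`, where `x` occurs only in the first argument and `y` only in the
third. The alternating sum over `x` and `y` then factors by biadditivity. -/

theorem ract_one (m : M) : ract m (1 : G) = m := by
  simp [ract]

theorem ract_ract (m : M) (g h : G) : ract (ract m g) h = ract m (g * h) := by
  simp [ract, mul_smul]

theorem apply_ract_eq_of_invariant {B : Type*} {f : M → M → M → B}
    (hfG : ∀ (m n p : M) (g : G), f (ract m g) (ract n g) (ract p g) = f m n p)
    (m n p : M) (a b c : G) :
    f (ract m a) (ract n b) (ract p c) = f (ract m (a * b⁻¹)) n (ract p (c * b⁻¹)) := by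
  rw [← hfG (ract m (a * b⁻¹)) n (ract p (c * b⁻¹)) b, ract_ract, ract_ract,
    inv_mul_cancel_right, inv_mul_cancel_right]

theorem apply_ract_mul_eq_of_invariant {B : Type*} {f : M → M → M → B}
    (hfG : ∀ (m n p : M) (g : G), f (ract m g) (ract n g) (ract p g) = f m n p)
    (m n p : M) {x : G} (hx : φ x ∈ Subgroup.center G) (y : G) :
    f (ract m (x * y)) (ract n (φ x * y)) (ract p (φ (x * y))) =
      f (ract m ((φ x)⁻¹ * x)) n (ract p (φ y * y⁻¹)) := by
  have hcomm (g : G) : g * φ x = φ x * g := Subgroup.mem_center_iff.1 hx g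
  have hfirst : x * y * (φ x * y)⁻¹ = (φ x)⁻¹ * x := by
    rw [mul_inv_rev, mul_assoc, mul_inv_cancel_left, mul_inv_eq_iff_eq_mul, mul_assoc, hcomm,
      inv_mul_cancel_left]
  have hthird : φ (x * y) * (φ x * y)⁻¹ = φ y * y⁻¹ := by
    rw [map_mul, mul_inv_rev, ← hcomm, mul_assoc, ← mul_assoc (φ x), ← hcomm,
      mul_inv_cancel_right]
  rw [apply_ract_eq_of_invariant hfG, hfirst, hthird]

theorem wt_cons {n : ℕ} (b : Bool) (k : Fin n → Bool) :
    wt (Fin.cons b k : Fin (n + 1) → Bool) = (if b then 1 else 0) + wt k := by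
  simp only [wt, Fin.sum_univ_succ, Fin.cons_zero, Fin.cons_succ]

theorem sum_filter_zero_eq_false {B : Type*} [AddCommMonoid B] {n : ℕ}
    (F : (Fin (n + 1) → Bool) → B) :
    ∑ k with k 0 = false, F k = ∑ k : Fin n → Bool, F (Fin.cons false k) := by
  symm
  refine Finset.sum_nbij' (fun k => Fin.cons false k) Fin.tail ?_ ?_ ?_ ?_ ?_
  · simp
  · simp
  · simp
  · intro k hk
    rw [← (Finset.mem_filter.1 hk).2, Fin.cons_self_tail]
  · simp

theorem psiFree_of (n : ℕ) (g : Fin (n + 1) → G) (m : Fin (n + 1) → M) :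
    psiFree φ n (of (g, m)) =
      ∑ k : Fin n → Bool,
        (-1 : ℤ) ^ wt k • of fun i => ract (m i) (gki φ g (Fin.cons false k) i) := by
  simp [psiFree, psiVal, sum_filter_zero_eq_false, wt_cons]

/-- The generator `(m₀xy, m₁φ(x)y, m₂φ(xy))`, i.e. the term of `ψ₂(g₀, g₁, g₂; m₀, m₁, m₂)` indexed
by `k ∈ {0,1}²`, where `x` and `y` stand for `g₁^{k₁}` and `g₂^{k₂}`. -/
def psiTwoTerm (m : Fin 3 → M) (x y : G) : Fin 3 → M :=
  ![ract (m 0) (x * y), ract (m 1) (φ x * y), ract (m 2) (φ (x * y))]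

theorem ract_gki_cons_false_two (g : Fin 3 → G) (m : Fin 3 → M) (k : Fin 2 → Bool) :
    (fun i => ract (m i) (gki φ g (Fin.cons false k) i)) =
      psiTwoTerm φ m (if k 0 then g 1 else 1) (if k 1 then g 2 else 1) := by
  have hrange : List.finRange 3 = [0, 1, 2] := by decide
  have hone : (Fin.cons false k : Fin 3 → Bool) 1 = k 0 := rfl
  have htwo : (Fin.cons false k : Fin 3 → Bool) 2 = k 1 := rfl
  ext i
  fin_cases i <;> simp [psiTwoTerm, gki, hrange, hone, htwo, -mul_ite, -ite_mul]

theorem psiFree_two_of (g : Fin 3 → G) (m : Fin 3 → M) :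
    psiFree φ 2 (of (g, m)) =
      of (psiTwoTerm φ m 1 1) - of (psiTwoTerm φ m 1 (g 2)) -
        (of (psiTwoTerm φ m (g 1) 1) - of (psiTwoTerm φ m (g 1) (g 2))) := by
  simp only [psiFree_of, ract_gki_cons_false_two]
  rw [← (finTwoArrowEquiv Bool).symm.sum_comp, Fintype.sum_prod_type]
  simp only [Fintype.sum_bool, finTwoArrowEquiv_symm_apply, wt, Fin.sum_univ_two,
    Matrix.cons_val_zero, Matrix.cons_val_one, Bool.false_eq_true, ↓reduceIte, add_zero, zero_add,
    one_add_one_eq_two, even_two.neg_one_pow, pow_one, pow_zero, one_smul, neg_smul]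
  abel

theorem lift_psiFree_two_of (hφ : ∀ g : G, φ g ∈ Subgroup.center G) {f : M → M → M → A}
    (hf₁ : ∀ m m' n p : M, f (m + m') n p = f m n p + f m' n p)
    (hf₃ : ∀ m n p p' : M, f m n (p + p') = f m n p + f m n p')
    (hfG : ∀ (m n p : M) (g : G), f (ract m g) (ract n g) (ract p g) = f m n p)
    (g : Fin 3 → G) (m : Fin 3 → M) :
    FreeAbelianGroup.lift (fun v : Fin 3 → M => f (v 0) (v 1) (v 2)) (psiFree φ 2 (of (g, m))) =
      f (m 0 - ract (m 0) ((φ (g 1))⁻¹ * g 1)) (m 1) (m 2 - ract (m 2) (φ (g 2) * (g 2)⁻¹)) := by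
  have hsub₁ (a a' n p : M) : f (a - a') n p = f a n p - f a' n p :=
    map_sub (AddMonoidHom.mk' (f · n p) fun a a' => hf₁ a a' n p) a a'
  have hsub₃ (a n p p' : M) : f a n (p - p') = f a n p - f a n p' :=
    map_sub (AddMonoidHom.mk' (f a n) (hf₃ a n)) p p'
  have hterm (x y : G) :
      FreeAbelianGroup.lift (fun v : Fin 3 → M => f (v 0) (v 1) (v 2)) (of (psiTwoTerm φ m x y)) =
        f (ract (m 0) ((φ x)⁻¹ * x)) (m 1) (ract (m 2) (φ y * y⁻¹)) :=
    (lift_apply_of _ _).trans (apply_ract_mul_eq_of_invariant φ hfG _ _ _ (hφ x) y)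
  simp only [psiFree_two_of, map_sub, hterm, map_one, inv_one, mul_one, ract_one, hsub₁, hsub₃]

omit [Group G] [DistribMulAction Gᵐᵒᵖ M] in
theorem gammaMap_three_of (m₀ m₁ m₂ : M) (g₀ g₁ g₂ : G) :
    gammaMap 3 (of ![(m₀, g₀), (m₁, g₁), (m₂, g₂)]) =
      of (![g₀, g₁, g₂], ![m₀ - m₁, m₁ - m₂, m₂]) := by
  rw [gammaMap, lift_apply_of]
  congr 2 <;> ext i <;> fin_cases i <;> simp

theorem birackX_two_cocycle_formula_general (hφ : ∀ g : G, φ g ∈ Subgroup.center G)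
    (f : M → M → M → A)
    (hf₁ : ∀ m m' n p : M, f (m + m') n p = f m n p + f m' n p)
    (hf₃ : ∀ m n p p' : M, f m n (p + p') = f m n p + f m n p')
    (hfG : ∀ (m n p : M) (g : G), f (ract m g) (ract n g) (ract p g) = f m n p)
    (m₀ m₁ m₂ : M) (g₀ g₁ g₂ : G) :
    FreeAbelianGroup.lift (fun v : Fin 3 → M => f (v 0) (v 1) (v 2))
        (psiFree φ 2
          (gammaMap 3 (FreeAbelianGroup.of ![(m₀, g₀), (m₁, g₁), (m₂, g₂)]))) =
      f ((m₀ - m₁) - ract (m₀ - m₁) ((φ g₁)⁻¹ * g₁)) (m₁ - m₂)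
        (m₂ - ract m₂ (φ g₂ * g₂⁻¹)) := by
  rw [gammaMap_three_of]
  exact lift_psiFree_two_of φ hφ hf₁ hf₃ hfG ![g₀, g₁, g₂] ![m₀ - m₁, m₁ - m₂, m₂]

/-- For a `G`-invariant `A`-multilinear map `f : M³ → A`, the birack
`2`-cocycle `Φ_f = f ∘ ψ₂ ∘ γ₂ : C^{BR}_2(X;ℤ)_X → A` (with `X`-set `X`) satisfies
`Φ_f((m₀,g₀),(m₁,g₁),(m₂,g₂)) =
  f((m₀−m₁) − (m₀−m₁)·(φ(g₁)⁻¹g₁), m₁ − m₂, m₂ − m₂·(φ(g₂)g₂⁻¹))`. -/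
theorem birackX_two_cocycle_formula (hφ : ∀ g : G, φ g ∈ Subgroup.center G)
    (f : M → M → M → A)
    (hf₁ : ∀ m m' n p : M, f (m + m') n p = f m n p + f m' n p)
    (hf₂ : ∀ m n n' p : M, f m (n + n') p = f m n p + f m n' p)
    (hf₃ : ∀ m n p p' : M, f m n (p + p') = f m n p + f m n p')
    (hfG : ∀ (m n p : M) (g : G), f (ract m g) (ract n g) (ract p g) = f m n p) :
    ∀ (m₀ m₁ m₂ : M) (g₀ g₁ g₂ : G),
      FreeAbelianGroup.lift (fun v : Fin 3 → M => f (v 0) (v 1) (v 2))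
          (psiFree φ 2
            (gammaMap 3 (FreeAbelianGroup.of ![(m₀, g₀), (m₁, g₁), (m₂, g₂)]))) =
        f ((m₀ - m₁) - ract (m₀ - m₁) ((φ g₁)⁻¹ * g₁)) (m₁ - m₂)
          (m₂ - ract m₂ (φ g₂ * g₂⁻¹)) :=
  birackX_two_cocycle_formula_general φ hφ f hf₁ hf₃ hfG

end GAlex
end

section
/- For every integer n, γ_n(D^{BR}_n(X;ℤ)) = D^{BR_U}_n(X;ℤ); consequently γ_n induces an isomorphism of abelian groups C^{BR}_n(X;ℤ)/D^{BR}_n(X;ℤ) ≅ C^{BR_U}_n(X;ℤ)/D^{BR_U}_n(X;ℤ). -/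
open FreeAbelianGroup
open scoped TensorProduct

namespace GAlex

variable {G M A : Type*} [Group G] [AddCommGroup M] [DistribMulAction Gᵐᵒᵖ M] [AddCommGroup A]

variable (φ : G →* G)

/-- The degenerate subgroup `D^{BR}_n(X;ℤ)` of `C^{BR}_n(X;ℤ)` (which is `0` for `n ≤ 1`). -/
def DBRsub : (n : ℕ) → AddSubgroup (FreeAbelianGroup (Fin n → M × G))
  | 0 => ⊥
  | 1 => ⊥
  | n + 2 =>
    AddSubgroup.closure
      ({z | ∃ (x : Fin (n + 2) → M × G) (i : Fin (n + 2)) (h : (i : ℕ) + 1 < n + 2),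
          (x i).1 = (x ⟨(i : ℕ) + 1, h⟩).1 ∧ z = FreeAbelianGroup.of x} ∪
        {z | ∃ (x : Fin (n + 2) → M × G) (i : Fin (n + 2)) (m : M) (g h : G),
          z = FreeAbelianGroup.of (Function.update x i (m, g * h)) -
              FreeAbelianGroup.of (Function.update x i (m, g)) -
              FreeAbelianGroup.of fun j : Fin (n + 2) =>
                if (j : ℕ) < (i : ℕ) then under φ (x j) (m, g)
                else if j = i then overOp φ (m, h) (m, g)
                else overOp φ (x j) (m, g)})

/-- The degenerate subgroup `D^{BR_U}_n(X;ℤ)` of `C^{BR_U}_n(X;ℤ)` (which is `0` for `n ≤ 1`). -/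
def DBRUsub : (n : ℕ) → AddSubgroup (FreeAbelianGroup ((Fin n → G) × (Fin n → M)))
  | 0 => ⊥
  | 1 => ⊥
  | n + 2 =>
    AddSubgroup.closure
      ({z | ∃ (g : Fin (n + 2) → G) (m : Fin (n + 2) → M) (i : Fin (n + 2)),
          (i : ℕ) + 1 < n + 2 ∧ m i = 0 ∧ z = FreeAbelianGroup.of (g, m)} ∪
        {z | ∃ (g : Fin (n + 2) → G) (m : Fin (n + 2) → M) (i : Fin (n + 2)) (h : G),
          z = FreeAbelianGroup.of (Function.update g i (g i * h), m) -
              FreeAbelianGroup.of (g, m) -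
              FreeAbelianGroup.of
                ((fun j : Fin (n + 2) => if (j : ℕ) < (i : ℕ) then (g i)⁻¹ * g j * g i
                    else if j = i then h else g j),
                 (fun j : Fin (n + 2) => if (j : ℕ) < (i : ℕ) then ract (m j) (g i)
                    else ract (m j) (φ (g i))))})

/-!
`γ_n` comes from a bijection of bases, taking successive differences of the `M`-coordinates, whose
inverse takes tail sums. This bijection matches the generators of the two degenerate subgroups. Two
adjacent `M`-coordinates agree exactly when their difference vanishes. In the splitting relation at
`x_i = (n,h)`, the term `n(φ(h) − h)` of `(m,g) ⊳ (n,h)` cancels in the differences of the entries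
before position `i`; since `⊳` and `⊚` by `x_i` agree on the `M`-coordinate of `x_i` itself, the
difference `m_{i−1} − m_i` is multiplied by `h` as well.
-/

section SuccessiveDifferences

variable {n : ℕ} {N P : Type*}

theorem sum_Ici_eq_add_dite [AddCommMonoid N] (m : Fin n → N) (j : Fin n) :
    ∑ i ∈ Finset.Ici j, m i =
      m j + if h : (j : ℕ) + 1 < n then ∑ i ∈ Finset.Ici ⟨(j : ℕ) + 1, h⟩, m i else 0 := by
  rw [← Finset.add_sum_Ioi_eq_sum_Ici]
  congr 1
  split_ifs with h
  · have Ioi_eq_Ici : Finset.Ioi j = Finset.Ici ⟨(j : ℕ) + 1, h⟩ := by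
      ext i
      simp only [Finset.mem_Ioi, Finset.mem_Ici, Fin.lt_def, Fin.le_def]
      omega
    rw [Ioi_eq_Ici]
  · have Ioi_eq_empty : Finset.Ioi j = ∅ := by
      ext i
      simp only [Finset.mem_Ioi, Fin.lt_def, Finset.notMem_empty, iff_false]
      omega
    rw [Ioi_eq_empty, Finset.sum_empty]

variable [AddCommGroup N] [AddCommGroup P]

/-- The tuple of successive differences `(m₁ − m₂, …, m_{n−1} − m_n, m_n)`; the last entry follows
the convention `m_{n+1} = 0`. -/
def successiveDiff (m : Fin n → N) (j : Fin n) : N :=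
  m j - if h : (j : ℕ) + 1 < n then m ⟨(j : ℕ) + 1, h⟩ else 0

theorem successiveDiff_of_lt (m : Fin n → N) (j : Fin n) (h : (j : ℕ) + 1 < n) :
    successiveDiff m j = m j - m ⟨(j : ℕ) + 1, h⟩ := by
  rw [successiveDiff, dif_pos h]

theorem successiveDiff_of_not_lt (m : Fin n → N) (j : Fin n) (h : ¬ (j : ℕ) + 1 < n) :
    successiveDiff m j = m j := by
  rw [successiveDiff, dif_neg h, sub_zero]

theorem successiveDiff_sum_Ici (m : Fin n → N) :
    successiveDiff (fun j => ∑ i ∈ Finset.Ici j, m i) = m := by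
  funext j
  rw [successiveDiff, sum_Ici_eq_add_dite, add_sub_cancel_right]

theorem sum_Ici_successiveDiff (m : Fin n → N) (j : Fin n) :
    ∑ i ∈ Finset.Ici j, successiveDiff m i = m j := by
  induction j using WellFoundedGT.induction with
  | _ j ih =>
    rw [sum_Ici_eq_add_dite]
    split_ifs with h
    · rw [ih ⟨(j : ℕ) + 1, h⟩ (Nat.lt_succ_self j), successiveDiff_of_lt m j h, sub_add_cancel]
    · rw [successiveDiff_of_not_lt m j h, add_zero]

/-- The bijection on bases underlying `γ_n`; its inverse is the one underlying `r_n`. -/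
def gammaEquiv (n : ℕ) (S N : Type*) [AddCommGroup N] :
    (Fin n → N × S) ≃ (Fin n → S) × (Fin n → N) where
  toFun x := (fun j => (x j).2, successiveDiff fun j => (x j).1)
  invFun p j := (∑ i ∈ Finset.Ici j, p.2 i, p.1 j)
  left_inv _ := funext fun j => Prod.ext (sum_Ici_successiveDiff _ j) rfl
  right_inv p := Prod.ext rfl (successiveDiff_sum_Ici p.2)

theorem gammaMap_of {S : Type*} (x : Fin n → N × S) :
    gammaMap n (of x) = of (gammaEquiv n S N x) :=
  lift_apply_of _ x

theorem gammaMap_eq_equivOfEquiv (n : ℕ) (S N : Type*) [AddCommGroup N] :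
    gammaMap n = (equivOfEquiv (gammaEquiv n S N)).toAddMonoidHom :=
  lift_ext _ _ fun x => (gammaMap_of x).trans (map_of_apply x).symm

theorem gammaEquiv_update {S : Type*} (x : Fin n → N × S) (i : Fin n) (s : S) :
    gammaEquiv n S N (Function.update x i ((x i).1, s)) =
      (Function.update (gammaEquiv n S N x).1 i s, (gammaEquiv n S N x).2) := by
  have fst_update (j : Fin n) : (Function.update x i ((x i).1, s) j).1 = (x j).1 := by
    rw [Function.apply_update fun _ => Prod.fst]
    exact congrFun (Function.update_eq_self i fun j => (x j).1) j
  refine Prod.ext (funext fun j => ?_) (congrArg successiveDiff (funext fst_update))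
  exact Function.apply_update (fun _ => Prod.snd) x i ((x i).1, s) j

theorem successiveDiff_ite_lt (f f' : N →+ P) (m : Fin n → N) (i : Fin n) :
    successiveDiff (fun j : Fin n =>
        if (j : ℕ) < i then f (m j) + f' (m i) - f (m i) else f' (m j)) =
      fun j : Fin n => if (j : ℕ) < i then f (successiveDiff m j) else f' (successiveDiff m j) := by
  funext j
  by_cases hn : (j : ℕ) + 1 < n
  · rw [successiveDiff_of_lt _ j hn, successiveDiff_of_lt m j hn, map_sub, map_sub]
    rcases lt_trichotomy ((j : ℕ) + 1) i with hlt | heq | hgt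
    · simp only [if_pos hlt, if_pos (Nat.lt_of_succ_lt hlt)]
      abel
    · obtain rfl : ⟨(j : ℕ) + 1, hn⟩ = i := Fin.ext heq
      simp only [Nat.lt_succ_self, lt_irrefl, if_true, if_false]
      abel
    · simp only [if_neg hgt.not_gt, if_neg (Nat.le_of_lt_succ hgt).not_gt]
  · have hij : ¬ (j : ℕ) < i := by omega
    simp only [successiveDiff_of_not_lt _ j hn, if_neg hij]

end SuccessiveDifferences

section AdjacentEntries

variable (n : ℕ) (S N : Type*)

/-- The tuples generating part (i) of `D^{BR}_n`: two adjacent `M`-coordinates agree. -/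
def adjacentEqual : Set (Fin n → N × S) :=
  {x | ∃ (i : Fin n) (h : (i : ℕ) + 1 < n), (x i).1 = (x ⟨(i : ℕ) + 1, h⟩).1}

/-- The tuples generating part (i) of `D^{BR_U}_n`: an `M`-entry other than the last is zero. -/
def nonlastZero [Zero N] : Set ((Fin n → S) × (Fin n → N)) :=
  {p | ∃ i : Fin n, (i : ℕ) + 1 < n ∧ p.2 i = 0}

variable [AddCommGroup N]

theorem gammaEquiv_preimage_nonlastZero :
    gammaEquiv n S N ⁻¹' nonlastZero n S N = adjacentEqual n S N := by
  ext x
  refine exists_congr fun i => ?_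
  rw [← exists_prop]
  refine exists_congr fun h => ?_
  rw [← sub_eq_zero (a := (x i).1), ← successiveDiff_of_lt (fun j => (x j).1) i h]
  rfl

theorem gammaMap_image_adjacentEqual :
    gammaMap n '' (of '' adjacentEqual n S N) = of '' nonlastZero n S N := by
  simp only [Set.image_image, gammaMap_of]
  rw [← Set.image_image of, ← gammaEquiv_preimage_nonlastZero, Equiv.image_preimage]

end AdjacentEntries

section SplittingRelations

variable {n : ℕ}

/-- The last tuple of the relation in part (ii) of `D^{BR}_n` for splitting the `i`-th entry
`(m, g * h)`, where `x i = (m, g)`: the entry becomes `(m, h) ⊚ (m, g)`, and `(m, g)` acts on the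
other entries. -/
def splitRemainderBR (x : Fin n → M × G) (i : Fin n) (h : G) : Fin n → M × G :=
  fun j => if (j : ℕ) < i then under φ (x j) (x i)
    else if j = i then overOp φ ((x i).1, h) (x i)
    else overOp φ (x j) (x i)

/-- The last tuple of the relation in part (ii) of `D^{BR_U}_n` for splitting the `i`-th group
entry `g * h`, where `p.1 i = g`. -/
def splitRemainderBRU (p : (Fin n → G) × (Fin n → M)) (i : Fin n) (h : G) :
    (Fin n → G) × (Fin n → M) :=
  (fun j => if (j : ℕ) < i then (p.1 i)⁻¹ * p.1 j * p.1 i else if j = i then h else p.1 j,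
   fun j => if (j : ℕ) < i then ract (p.2 j) (p.1 i) else ract (p.2 j) (φ (p.1 i)))

/-- The generator in part (ii) of `D^{BR}_n`, parametrized by the tuple `x` with `x i = (m, g)`. -/
def splitRelationBR (x : Fin n → M × G) (i : Fin n) (h : G) : FreeAbelianGroup (Fin n → M × G) :=
  of (Function.update x i ((x i).1, (x i).2 * h)) - of x - of (splitRemainderBR φ x i h)

/-- The generator in part (ii) of `D^{BR_U}_n`. -/
def splitRelationBRU (p : (Fin n → G) × (Fin n → M)) (i : Fin n) (h : G) :
    FreeAbelianGroup ((Fin n → G) × (Fin n → M)) :=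
  of (Function.update p.1 i (p.1 i * h), p.2) - of p - of (splitRemainderBRU φ p i h)

theorem splitRemainderBR_fst (x : Fin n → M × G) (i : Fin n) (h : G) (j : Fin n) :
    (splitRemainderBR φ x i h j).1 =
      if (j : ℕ) < i then ract (x j).1 (x i).2 + ract (x i).1 (φ (x i).2) - ract (x i).1 (x i).2
      else ract (x j).1 (φ (x i).2) := by
  unfold splitRemainderBR
  split_ifs with hlt heq
  · rfl
  · rw [heq]
    rfl
  · rfl

theorem splitRemainderBR_snd (x : Fin n → M × G) (i : Fin n) (h : G) (j : Fin n) :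
    (splitRemainderBR φ x i h j).2 =
      if (j : ℕ) < i then (x i).2⁻¹ * (x j).2 * (x i).2 else if j = i then h else (x j).2 := by
  unfold splitRemainderBR
  split_ifs <;> rfl

theorem gammaEquiv_splitRemainderBR (x : Fin n → M × G) (i : Fin n) (h : G) :
    gammaEquiv n G M (splitRemainderBR φ x i h) =
      splitRemainderBRU φ (gammaEquiv n G M x) i h := by
  let actHom (g : G) : M →+ M := DistribSMul.toAddMonoidHom M (MulOpposite.op g)
  refine Prod.ext (funext (splitRemainderBR_snd φ x i h)) ?_
  calc
    successiveDiff (fun j => (splitRemainderBR φ x i h j).1) = successiveDiff fun j =>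
        if (j : ℕ) < i then ract (x j).1 (x i).2 + ract (x i).1 (φ (x i).2) - ract (x i).1 (x i).2
        else ract (x j).1 (φ (x i).2) :=
      congrArg successiveDiff (funext (splitRemainderBR_fst φ x i h))
    _ = (splitRemainderBRU φ (gammaEquiv n G M x) i h).2 :=
      successiveDiff_ite_lt (actHom (x i).2) (actHom (φ (x i).2)) (fun j => (x j).1) i

theorem gammaMap_splitRelationBR (x : Fin n → M × G) (i : Fin n) (h : G) :
    gammaMap n (splitRelationBR φ x i h) = splitRelationBRU φ (gammaEquiv n G M x) i h := by
  rw [splitRelationBR, map_sub, map_sub, gammaMap_of, gammaMap_of, gammaMap_of, gammaEquiv_update,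
    gammaEquiv_splitRemainderBR]
  rfl

theorem gammaMap_image_splitRelationBR :
    gammaMap n '' {z | ∃ (x : Fin n → M × G) (i : Fin n) (h : G), z = splitRelationBR φ x i h} =
      {z | ∃ (p : (Fin n → G) × (Fin n → M)) (i : Fin n) (h : G),
        z = splitRelationBRU φ p i h} := by
  ext z
  constructor
  · rintro ⟨_, ⟨x, i, h, rfl⟩, rfl⟩
    exact ⟨gammaEquiv n G M x, i, h, gammaMap_splitRelationBR φ x i h⟩
  · rintro ⟨p, i, h, rfl⟩
    obtain ⟨x, rfl⟩ := (gammaEquiv n G M).surjective p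
    exact ⟨_, ⟨x, i, h, rfl⟩, gammaMap_splitRelationBR φ x i h⟩

theorem splitRelationBR_update (x : Fin n → M × G) (i : Fin n) (m : M) (g h : G) :
    splitRelationBR φ (Function.update x i (m, g)) i h =
      of (Function.update x i (m, g * h)) - of (Function.update x i (m, g)) -
        of fun j : Fin n => if (j : ℕ) < i then under φ (x j) (m, g)
          else if j = i then overOp φ (m, h) (m, g)
          else overOp φ (x j) (m, g) := by
  have remainder_eq : splitRemainderBR φ (Function.update x i (m, g)) i h =
      fun j : Fin n => if (j : ℕ) < i then under φ (x j) (m, g)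
        else if j = i then overOp φ (m, h) (m, g)
        else overOp φ (x j) (m, g) := by
    funext j
    obtain rfl | hji := eq_or_ne j i
    · simp [splitRemainderBR]
    · simp [splitRemainderBR, hji]
  rw [splitRelationBR, remainder_eq, Function.update_self, Function.update_idem]

end SplittingRelations

theorem DBRsub_add_two (n : ℕ) :
    DBRsub φ (n + 2) = AddSubgroup.closure (of '' adjacentEqual (n + 2) G M ∪
      {z | ∃ (x : Fin (n + 2) → M × G) (i : Fin (n + 2)) (h : G),
        z = splitRelationBR φ x i h}) := by
  unfold DBRsub
  refine congrArg AddSubgroup.closure (congrArg₂ Union.union ?_ ?_) <;> ext z <;> constructor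
  · rintro ⟨x, i, h, hx, rfl⟩
    exact ⟨x, ⟨i, h, hx⟩, rfl⟩
  · rintro ⟨x, ⟨i, h, hx⟩, rfl⟩
    exact ⟨x, i, h, hx, rfl⟩
  · rintro ⟨x, i, m, g, h, rfl⟩
    exact ⟨Function.update x i (m, g), i, h, (splitRelationBR_update φ x i m g h).symm⟩
  · rintro ⟨x, i, h, rfl⟩
    refine ⟨x, i, (x i).1, (x i).2, h, ?_⟩
    rw [← splitRelationBR_update, Prod.mk.eta, Function.update_eq_self]

theorem DBRUsub_add_two (n : ℕ) :
    DBRUsub φ (n + 2) = AddSubgroup.closure (of '' nonlastZero (n + 2) G M ∪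
      {z | ∃ (p : (Fin (n + 2) → G) × (Fin (n + 2) → M)) (i : Fin (n + 2)) (h : G),
        z = splitRelationBRU φ p i h}) := by
  unfold DBRUsub
  refine congrArg AddSubgroup.closure (congrArg₂ Union.union ?_ ?_) <;> ext z <;> constructor
  · rintro ⟨g, m, i, hi, hm, rfl⟩
    exact ⟨(g, m), ⟨i, hi, hm⟩, rfl⟩
  · rintro ⟨⟨g, m⟩, ⟨i, hi, hm⟩, rfl⟩
    exact ⟨g, m, i, hi, hm, rfl⟩
  · rintro ⟨g, m, i, h, rfl⟩
    exact ⟨(g, m), i, h, rfl⟩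
  · rintro ⟨⟨g, m⟩, i, h, rfl⟩
    exact ⟨g, m, i, h, rfl⟩

theorem map_gammaMap_DBRsub :
    ∀ n : ℕ, (DBRsub φ n).map (gammaMap (G := G) (M := M) n) = DBRUsub φ n
  | 0 => AddSubgroup.map_bot _
  | 1 => AddSubgroup.map_bot _
  | n + 2 => by
    rw [DBRsub_add_two, DBRUsub_add_two, AddMonoidHom.map_closure, Set.image_union,
      gammaMap_image_adjacentEqual, gammaMap_image_splitRelationBR]

theorem gamma_degenerate_and_induced_iso_general :
    (∀ n : ℕ, (DBRsub φ n).map (gammaMap (G := G) (M := M) n) = DBRUsub φ n) ∧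
      (∀ n : ℕ,
        ∃ e : (FreeAbelianGroup (Fin n → M × G) ⧸ DBRsub φ n) ≃+
            (FreeAbelianGroup ((Fin n → G) × (Fin n → M)) ⧸ DBRUsub φ n),
          ∀ z : FreeAbelianGroup (Fin n → M × G),
            e (QuotientAddGroup.mk z) = QuotientAddGroup.mk (gammaMap n z)) := by
  refine ⟨map_gammaMap_DBRsub φ, fun n => ?_⟩
  have map_eq : (DBRsub φ n).map (equivOfEquiv (gammaEquiv n G M)).toAddMonoidHom = DBRUsub φ n :=
    gammaMap_eq_equivOfEquiv n G M ▸ map_gammaMap_DBRsub φ n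
  refine ⟨QuotientAddGroup.congr _ _ (equivOfEquiv (gammaEquiv n G M)) map_eq, fun z => ?_⟩
  rw [gammaMap_eq_equivOfEquiv]
  rfl

/-- `γ_n(D^{BR}_n(X;ℤ)) = D^{BR_U}_n(X;ℤ)` for every `n`; consequently
`γ_n` induces an isomorphism of the quotients
`C^{BR}_n(X;ℤ)/D^{BR}_n(X;ℤ) ≅ C^{BR_U}_n(X;ℤ)/D^{BR_U}_n(X;ℤ)`. -/
theorem gamma_degenerate_and_induced_iso (hφ : ∀ g : G, φ g ∈ Subgroup.center G) :
    (∀ n : ℕ, (DBRsub φ n).map (gammaMap (G := G) (M := M) n) = DBRUsub φ n) ∧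
      (∀ n : ℕ,
        ∃ e : (FreeAbelianGroup (Fin n → M × G) ⧸ DBRsub φ n) ≃+
            (FreeAbelianGroup ((Fin n → G) × (Fin n → M)) ⧸ DBRUsub φ n),
          ∀ z : FreeAbelianGroup (Fin n → M × G),
            e (QuotientAddGroup.mk z) = QuotientAddGroup.mk (gammaMap n z)) :=
  gamma_degenerate_and_induced_iso_general φ

end GAlex
end

section
/- Let λ : G → A be a group homomorphism. Then for every n, ψ_{n,λ}(D^{BR_U}_n(X;ℤ)) is contained in the image of D^{gp}_n(M;ℤ)_G ⊗_ℤ A in C^{gp}_n(M;ℤ)_G ⊗_ℤ A; hence ψ_{n,λ} induces a homomorphism C^{BR_U}_n(X;ℤ)/D^{BR_U}_n(X;ℤ) → (C^{gp}_n(M;ℤ)_G/D^{gp}_n(M;ℤ)_G) ⊗_ℤ A. -/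
open FreeAbelianGroup
open scoped TensorProduct

namespace GAlex

variable {G M A : Type*} [Group G] [AddCommGroup M] [DistribMulAction Gᵐᵒᵖ M] [AddCommGroup A]

variable (φ : G →* G)

/-- The image of `D^{gp}_n(M;ℤ)_G ⊗_ℤ A` in `C^{gp}_n(M;ℤ)_G ⊗_ℤ A`: the subgroup generated
by the pure tensors `d ⊗ a` with `d ∈ D^{gp}_n(M;ℤ)_G`. -/
noncomputable def imageDgpA (n : ℕ) : AddSubgroup (TensorProduct ℤ (CgpG (G := G) (M := M) n) A) :=
  AddSubgroup.closure
    {z | ∃ d ∈ DgpGsub (G := G) (M := M) n, ∃ a : A, z = d ⊗ₜ[ℤ] a}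

/-! A generator of the first kind has a vanishing entry `m_i`, and the action of `G` keeps it
vanishing in every summand of `ψ`.

A generator of the second kind compares the chain with entry `g_i h` to the chains with entries
`g_i` and `h`, the last one transported across `g_i`. Let first `i` be the leading position. There
`k_i = 0`, so `ψ` does not see the leading `G`-entry; since `φ(G)` is central, the three chains have
the same image in the coinvariants, and the relation becomes additivity of `λ`. If `i` is not the
leading position, then `λ` takes the same value on the three leading entries, and already the
`ψ`-values cancel: write `ψ` as a sum of differences of the summands at `k` and at `k + 1_i`, for
`k_i = 0`. At `k` the entries `g_i h` and `g_i` both contribute `1`, and the third chain reproduces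
at `k` and `k + 1_i` the summands at `k + 1_i` of the second and the first chain, because the factor
`g_i` moves to the front of the ordered product by conjugating the earlier entries. -/

theorem zero_ract (g : G) : ract (0 : M) g = 0 :=
  smul_zero _

section OrderedProducts

variable {ι : Type*} [LinearOrder ι]

/-- The family obtained from `e` by moving a factor `a` out of the `i`-th entry to the front of the
ordered product, which conjugates the earlier entries by `a`. -/
def extractLeft (i : ι) (a : G) (e : ι → G) (l : ι) : G :=
  if l < i then a⁻¹ * e l * a else if l = i then a⁻¹ * e l else e l

theorem extractLeft_of_lt {i l : ι} (hl : l < i) (a : G) (e : ι → G) :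
    extractLeft i a e l = a⁻¹ * e l * a :=
  if_pos hl

theorem extractLeft_self (i : ι) (a : G) (e : ι → G) : extractLeft i a e i = a⁻¹ * e i := by
  simp [extractLeft]

theorem extractLeft_of_gt {i l : ι} (hl : i < l) (a : G) (e : ι → G) :
    extractLeft i a e l = e l := by
  simp [extractLeft, hl.not_gt, hl.ne']

theorem prod_map_extractLeft_of_lt {i : ι} {L : List ι} (hL : ∀ l ∈ L, l < i) (a : G)
    (e : ι → G) : (L.map (extractLeft i a e)).prod = a⁻¹ * (L.map e).prod * a := by
  induction L with
  | nil => simp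
  | cons l L ih =>
    rw [List.forall_mem_cons] at hL
    simp only [List.map_cons, List.prod_cons, extractLeft_of_lt hL.1, ih hL.2]
    group

theorem map_extractLeft_of_gt {i : ι} {L : List ι} (hL : ∀ l ∈ L, i < l) (a : G) (e : ι → G) :
    L.map (extractLeft i a e) = L.map e :=
  List.map_congr_left fun l hl => extractLeft_of_gt (hL l hl) a e

theorem mul_prod_map_extractLeft {i : ι} {L : List ι} (hL : L.Pairwise (· < ·)) (hi : i ∈ L)
    (a : G) (e : ι → G) : a * (L.map (extractLeft i a e)).prod = (L.map e).prod := by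
  obtain ⟨L₁, L₂, rfl⟩ := List.append_of_mem hi
  obtain ⟨-, hL₂, hL₁⟩ := List.pairwise_append.1 hL
  have before : ∀ l ∈ L₁, l < i := fun l hl => hL₁ l hl i List.mem_cons_self
  have after : ∀ l ∈ L₂, i < l := (List.pairwise_cons.1 hL₂).1
  simp only [List.map_append, List.map_cons, List.prod_append, List.prod_cons,
    prod_map_extractLeft_of_lt before, extractLeft_self, map_extractLeft_of_gt after]
  group

end OrderedProducts

section BoolPow

variable {ι : Type*}

/-- The family `g_j^{k_j}`. -/
def boolPow (g : ι → G) (k : ι → Bool) (j : ι) : G := if k j then g j else 1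

theorem boolPow_update_of_eq_false [DecidableEq ι] {k : ι → Bool} {i : ι} (hk : k i = false)
    (g : ι → G) (a : G) : boolPow (Function.update g i a) k = boolPow g k := by
  funext l
  obtain rfl | hl := eq_or_ne l i
  · simp [boolPow, hk]
  · simp [boolPow, hl]

end BoolPow

section TwistedProducts

variable {n : ℕ}

/-- The product `φ(e₀ ⋯ e_i) · e_{i+1} ⋯ e_{n-1}`, which is `g_{k,i}` for `e_j = g_j^{k_j}`. -/
def twistedProd (e : Fin n → G) (i : Fin n) : G :=
  φ (((List.finRange n).filter fun j => decide (j ≤ i)).map e).prod *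
    (((List.finRange n).filter fun j => decide (i < j)).map e).prod

theorem gki_eq_twistedProd (g : Fin n → G) (k : Fin n → Bool) (i : Fin n) :
    gki φ g k i = twistedProd φ (boolPow g k) i :=
  rfl

theorem pairwise_lt_filter_finRange (p : Fin n → Bool) :
    ((List.finRange n).filter p).Pairwise (· < ·) :=
  (List.pairwise_lt_finRange n).filter p

theorem mul_twistedProd_extractLeft (hφ : ∀ g : G, φ g ∈ Subgroup.center G) (i : Fin n) (a : G)
    (e : Fin n → G) (j : Fin n) :
    (if j < i then a else φ a) * twistedProd φ (extractLeft i a e) j = twistedProd φ e j := by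
  have comm (x y : G) : y * φ x = φ x * y := Subgroup.mem_center_iff.1 (hφ x) y
  unfold twistedProd
  split_ifs with hji
  · have lower : ∀ l ∈ (List.finRange n).filter fun l => decide (l ≤ j), l < i :=
      fun l hl => (by simpa using hl : l ≤ j).trans_lt hji
    have map_conj (x : G) : φ (a⁻¹ * x * a) = φ x := by
      rw [map_mul, map_mul, mul_assoc, comm, map_inv, inv_mul_cancel_left]
    rw [prod_map_extractLeft_of_lt lower, map_conj, ← mul_assoc, comm, mul_assoc,
      mul_prod_map_extractLeft (pairwise_lt_filter_finRange _) (by simpa using hji)]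
  · have upper : ∀ l ∈ (List.finRange n).filter fun l => decide (j < l), i < l :=
      fun l hl => (not_lt.1 hji).trans_lt (by simpa using hl)
    rw [map_extractLeft_of_gt upper, ← mul_assoc, ← map_mul,
      mul_prod_map_extractLeft (pairwise_lt_filter_finRange _) (by simpa using hji)]

end TwistedProducts

section Transport

variable {ι : Type*} [LinearOrder ι]

/-- The `G`-entries of the last chain in the relation splitting the `i`-th entry as `g_i h`. -/
def transportG (i : ι) (h : G) (g : ι → G) (j : ι) : G :=
  if j < i then (g i)⁻¹ * g j * g i else if j = i then h else g j

/-- The `M`-entries of the last chain in the relation splitting the `i`-th entry as `a h`. -/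
def transportM (i : ι) (a : G) (m : ι → M) (j : ι) : M :=
  if j < i then ract (m j) a else ract (m j) (φ a)

theorem transportG_zero {n : ℕ} (h : G) (g : Fin (n + 1) → G) :
    transportG 0 h g = Function.update g 0 h := by
  funext j
  simp [transportG, Function.update_apply]

theorem transportM_zero {n : ℕ} (a : G) (m : Fin (n + 1) → M) :
    transportM φ 0 a m = fun j => ract (m j) (φ a) := by
  funext j
  simp [transportM]

theorem boolPow_transportG_of_eq_false {k : ι → Bool} {i : ι} (hk : k i = false) (h : G)
    (g : ι → G) :
    boolPow (transportG i h g) k =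
      extractLeft i (g i) (boolPow g (Function.update k i true)) := by
  funext l
  obtain hl | rfl | hl := lt_trichotomy l i
  · cases hkl : k l <;> simp [boolPow, transportG, extractLeft, hl, hl.ne, hkl]
  · simp [boolPow, extractLeft, hk]
  · simp [boolPow, transportG, extractLeft, hl.not_gt, hl.ne']

theorem boolPow_transportG_of_eq_true {k : ι → Bool} {i : ι} (hk : k i = true) (h : G)
    (g : ι → G) :
    boolPow (transportG i h g) k =
      extractLeft i (g i) (boolPow (Function.update g i (g i * h)) k) := by
  funext l
  obtain hl | rfl | hl := lt_trichotomy l i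
  · cases hkl : k l <;> simp [boolPow, transportG, extractLeft, hl, hl.ne, hkl]
  · simp [boolPow, transportG, extractLeft, hk]
  · simp [boolPow, transportG, extractLeft, hl.not_gt, hl.ne']

end Transport

section PsiSummands

variable {n : ℕ}

/-- The tuple `(m₀ g_{k,0}, …, m_{n-1} g_{k,n-1})`, a summand of `ψ` up to sign. -/
def psiTuple (g : Fin n → G) (m : Fin n → M) (k : Fin n → Bool) (i : Fin n) : M :=
  ract (m i) (gki φ g k i)

theorem psiVal_eq_sum (g : Fin (n + 1) → G) (m : Fin (n + 1) → M) :
    psiVal φ n (g, m) =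
      ∑ k with k 0 = false, (-1 : ℤ) ^ wt k • FreeAbelianGroup.of (psiTuple φ g m k) :=
  rfl

theorem psiTuple_congr {g g' : Fin n → G} {k : Fin n → Bool} (h : boolPow g k = boolPow g' k)
    (m : Fin n → M) : psiTuple φ g m k = psiTuple φ g' m k := by
  funext j
  rw [psiTuple, psiTuple, gki_eq_twistedProd, gki_eq_twistedProd, h]

theorem psiTuple_transportM (hφ : ∀ g : G, φ g ∈ Subgroup.center G) {g g' : Fin n → G}
    {k k' : Fin n → Bool} {i : Fin n} {a : G}
    (h : boolPow g k = extractLeft i a (boolPow g' k')) (m : Fin n → M) :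
    psiTuple φ g (transportM φ i a m) k = psiTuple φ g' m k' := by
  funext j
  rw [psiTuple, psiTuple, gki_eq_twistedProd φ g', ← mul_twistedProd_extractLeft φ hφ i a, ← h,
    ← gki_eq_twistedProd, ← ract_ract, transportM, apply_ite (ract (m j))]

theorem psiTuple_ract_of_mem_center {a : G} (ha : a ∈ Subgroup.center G) (g : Fin n → G)
    (m : Fin n → M) (k : Fin n → Bool) :
    psiTuple φ g (fun j => ract (m j) a) k = fun j => ract (psiTuple φ g m k j) a := by
  funext j
  rw [psiTuple, psiTuple, ract_ract, ract_ract, Subgroup.mem_center_iff.1 ha]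

end PsiSummands

section SignedSums

theorem wt_update_true {n : ℕ} {k : Fin n → Bool} {i : Fin n} (hk : k i = false) :
    wt (Function.update k i true) = wt k + 1 := by
  unfold wt
  rw [← Finset.add_sum_erase _ _ (Finset.mem_univ i),
    ← Finset.add_sum_erase _ (fun j => if k j then 1 else 0) (Finset.mem_univ i),
    Finset.sum_congr rfl fun j hj => by rw [Function.update_of_ne (Finset.ne_of_mem_erase hj)]]
  simp [hk, add_comm]

theorem sum_eq_sum_add_update_true {ι B : Type*} [DecidableEq ι] [AddCommMonoid B]
    {s : Finset (ι → Bool)} {i : ι} (hs : ∀ k ∈ s, ∀ b, Function.update k i b ∈ s)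
    (f : (ι → Bool) → B) :
    ∑ k ∈ s, f k = ∑ k ∈ s with k i = false, (f k + f (Function.update k i true)) := by
  rw [Finset.sum_add_distrib, ← Finset.sum_filter_add_sum_filter_not s (fun k => k i = false)]
  congr 1
  refine Finset.sum_nbij' (fun k => Function.update k i false) (fun k => Function.update k i true)
    ?_ ?_ ?_ ?_ ?_ <;> intro k hk <;> rw [Finset.mem_filter] at hk
  · simp [hs k hk.1]
  · simp [hs k hk.1]
  · simpa using hk.2
  · simpa using hk.2.symm
  · congr 1
    simpa using hk.2

theorem psiVal_eq_sum_sub {n : ℕ} {i : Fin (n + 1)} (hi : i ≠ 0) (g : Fin (n + 1) → G)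
    (m : Fin (n + 1) → M) :
    psiVal φ n (g, m) =
      ∑ k : Fin (n + 1) → Bool with k 0 = false ∧ k i = false,
        (-1 : ℤ) ^ wt k • (FreeAbelianGroup.of (psiTuple φ g m k) -
          FreeAbelianGroup.of (psiTuple φ g m (Function.update k i true))) := by
  rw [psiVal_eq_sum, sum_eq_sum_add_update_true (i := i) fun k hk b => by
    simpa [Function.update_of_ne hi.symm] using hk, Finset.filter_filter]
  refine Finset.sum_congr rfl fun k hk => ?_
  rw [wt_update_true (Finset.mem_filter.1 hk).2.2, pow_succ, mul_neg_one, neg_smul, smul_sub,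
    sub_eq_add_neg]

end SignedSums

section PsiVal

variable {n : ℕ}

theorem psiVal_update_mul (hφ : ∀ g : G, φ g ∈ Subgroup.center G) {i : Fin (n + 1)} (hi : i ≠ 0)
    (g : Fin (n + 1) → G) (m : Fin (n + 1) → M) (h : G) :
    psiVal φ n (Function.update g i (g i * h), m) =
      psiVal φ n (g, m) + psiVal φ n (transportG i h g, transportM φ i (g i) m) := by
  simp only [psiVal_eq_sum_sub φ hi]
  rw [← Finset.sum_add_distrib]
  refine Finset.sum_congr rfl fun k hk => ?_
  have hki : k i = false := (Finset.mem_filter.1 hk).2.2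
  have first_off := psiTuple_congr φ (boolPow_update_of_eq_false hki g (g i * h)) m
  have third_off := psiTuple_transportM φ hφ (boolPow_transportG_of_eq_false hki h g) m
  have third_on := psiTuple_transportM φ hφ
    (boolPow_transportG_of_eq_true (Function.update_self i true k) h g) m
  rw [first_off, third_off, third_on, ← smul_add, sub_add_sub_cancel]

theorem psiVal_update_zero (g : Fin (n + 1) → G) (a : G) (m : Fin (n + 1) → M) :
    psiVal φ n (Function.update g 0 a, m) = psiVal φ n (g, m) := by
  rw [psiVal_eq_sum, psiVal_eq_sum]
  refine Finset.sum_congr rfl fun k hk => ?_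
  rw [psiTuple_congr φ (boolPow_update_of_eq_false (Finset.mem_filter.1 hk).2 g a)]

theorem mk_of_ract (m : Fin n → M) (g : G) :
    QuotientAddGroup.mk' (coinvSub (G := G) n) (FreeAbelianGroup.of fun i => ract (m i) g) =
      QuotientAddGroup.mk' (coinvSub (G := G) n) (FreeAbelianGroup.of m) := by
  refine QuotientAddGroup.eq_iff_sub_mem.2 ?_
  exact AddSubgroup.subset_closure ⟨m, g, rfl⟩

theorem mk_psiVal_ract_of_mem_center {a : G} (ha : a ∈ Subgroup.center G) (g : Fin (n + 1) → G)
    (m : Fin (n + 1) → M) :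
    QuotientAddGroup.mk' (coinvSub (G := G) (n + 1)) (psiVal φ n (g, fun j => ract (m j) a)) =
      QuotientAddGroup.mk' (coinvSub (G := G) (n + 1)) (psiVal φ n (g, m)) := by
  simp only [psiVal_eq_sum, map_sum, map_zsmul, psiTuple_ract_of_mem_center φ ha, mk_of_ract]

theorem mk_psiVal_mem_DgpGsub {m : Fin (n + 1) → M} {i : Fin (n + 1)}
    (hi : (i : ℕ) + 1 < n + 1) (hm : m i = 0) (g : Fin (n + 1) → G) :
    QuotientAddGroup.mk' (coinvSub (G := G) (n + 1)) (psiVal φ n (g, m)) ∈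
      DgpGsub (G := G) (M := M) (n + 1) := by
  refine AddSubgroup.mem_map_of_mem _ (AddSubgroup.sum_mem _ fun k _ => ?_)
  refine AddSubgroup.zsmul_mem _ (AddSubgroup.subset_closure ?_) _
  exact ⟨psiTuple φ g m k, i, hi, by rw [psiTuple, hm, zero_ract], rfl⟩

end PsiVal

section PsiLam

variable {n : ℕ} {lam : G → A}

theorem psiLam_of (lam : G → A) (g : Fin (n + 1) → G) (m : Fin (n + 1) → M) :
    psiLam φ lam n (FreeAbelianGroup.of (g, m)) =
      QuotientAddGroup.mk' (coinvSub (G := G) (n + 1)) (psiVal φ n (g, m)) ⊗ₜ[ℤ] lam (g 0) :=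
  FreeAbelianGroup.lift_apply_of _ _

theorem apply_conj_of_map_mul {B : Type*} [AddCommMagma B] [IsLeftCancelAdd B] {f : G → B}
    (hf : ∀ g h : G, f (g * h) = f g + f h) (a g : G) : f (a⁻¹ * g * a) = f g := by
  have : f a + f (a⁻¹ * g * a) = f a + f g := by
    rw [← hf, add_comm (f a), ← hf]
    group
  exact add_left_cancel this

theorem psiLam_of_update_zero_mul (hφ : ∀ g : G, φ g ∈ Subgroup.center G)
    (hlam : ∀ g h : G, lam (g * h) = lam g + lam h) (g : Fin (n + 1) → G) (m : Fin (n + 1) → M)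
    (h : G) :
    psiLam φ lam n (FreeAbelianGroup.of (Function.update g 0 (g 0 * h), m)) =
      psiLam φ lam n (FreeAbelianGroup.of (g, m)) +
        psiLam φ lam n (FreeAbelianGroup.of (transportG 0 h g, transportM φ 0 (g 0) m)) := by
  simp only [psiLam_of, transportG_zero, transportM_zero, psiVal_update_zero,
    mk_psiVal_ract_of_mem_center φ (hφ (g 0)), Function.update_self, hlam, TensorProduct.tmul_add]

theorem psiLam_of_update_mul_of_ne_zero (hφ : ∀ g : G, φ g ∈ Subgroup.center G)
    (hlam : ∀ g h : G, lam (g * h) = lam g + lam h) {i : Fin (n + 1)} (hi : i ≠ 0)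
    (g : Fin (n + 1) → G) (m : Fin (n + 1) → M) (h : G) :
    psiLam φ lam n (FreeAbelianGroup.of (Function.update g i (g i * h), m)) =
      psiLam φ lam n (FreeAbelianGroup.of (g, m)) +
        psiLam φ lam n (FreeAbelianGroup.of (transportG i h g, transportM φ i (g i) m)) := by
  have lam_transportG : lam (transportG i h g 0) = lam (g 0) := by
    rw [transportG, if_pos (Fin.pos_iff_ne_zero.2 hi), apply_conj_of_map_mul hlam]
  rw [psiLam_of, psiLam_of, psiLam_of, Function.update_of_ne hi.symm, lam_transportG,
    psiVal_update_mul φ hφ hi, map_add, TensorProduct.add_tmul]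

theorem psiLam_of_update_mul (hφ : ∀ g : G, φ g ∈ Subgroup.center G)
    (hlam : ∀ g h : G, lam (g * h) = lam g + lam h) (i : Fin (n + 1)) (g : Fin (n + 1) → G)
    (m : Fin (n + 1) → M) (h : G) :
    psiLam φ lam n (FreeAbelianGroup.of (Function.update g i (g i * h), m)) =
      psiLam φ lam n (FreeAbelianGroup.of (g, m)) +
        psiLam φ lam n (FreeAbelianGroup.of (transportG i h g, transportM φ i (g i) m)) := by
  obtain rfl | hi := eq_or_ne i 0
  · exact psiLam_of_update_zero_mul φ hφ hlam g m h
  · exact psiLam_of_update_mul_of_ne_zero φ hφ hlam hi g m h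

theorem psiLam_of_mem_imageDgpA (lam : G → A) {m : Fin (n + 1) → M} {i : Fin (n + 1)}
    (hi : (i : ℕ) + 1 < n + 1) (hm : m i = 0) (g : Fin (n + 1) → G) :
    psiLam φ lam n (FreeAbelianGroup.of (g, m)) ∈
      imageDgpA (G := G) (M := M) (A := A) (n + 1) := by
  rw [psiLam_of]
  exact AddSubgroup.subset_closure ⟨_, mk_psiVal_mem_DgpGsub φ hi hm g, _, rfl⟩

theorem DBRUsub_le_comap_psiLam (hφ : ∀ g : G, φ g ∈ Subgroup.center G)
    (hlam : ∀ g h : G, lam (g * h) = lam g + lam h) (n : ℕ) :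
    DBRUsub (M := M) φ (n + 1) ≤
      (imageDgpA (G := G) (M := M) (A := A) (n + 1)).comap (psiLam φ lam n) := by
  cases n with
  | zero => exact bot_le
  | succ n =>
    refine (AddSubgroup.closure_le _).2 ?_
    rintro _ (⟨g, m, i, hi, hm, rfl⟩ | ⟨g, m, i, h, rfl⟩)
    · exact psiLam_of_mem_imageDgpA φ lam hi hm g
    · have relation : psiLam φ lam (n + 1)
          (FreeAbelianGroup.of (Function.update g i (g i * h), m) - FreeAbelianGroup.of (g, m) -
            FreeAbelianGroup.of (transportG i h g, transportM φ i (g i) m)) = 0 := by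
        rw [map_sub, map_sub, psiLam_of_update_mul φ hφ hlam, add_sub_cancel_left, sub_self]
      exact AddSubgroup.mem_comap.2 (relation ▸ AddSubgroup.zero_mem _)

end PsiLam

/-- For a group homomorphism `λ : G → A`, the map `ψ_{n,λ}` carries
`D^{BR_U}_n(X;ℤ)` into the image of `D^{gp}_n(M;ℤ)_G ⊗_ℤ A` in `C^{gp}_n(M;ℤ)_G ⊗_ℤ A`;
hence it induces a homomorphism between the corresponding quotients. -/
theorem psiLam_degenerate (hφ : ∀ g : G, φ g ∈ Subgroup.center G)
    (lam : G → A) (hlam : ∀ g h : G, lam (g * h) = lam g + lam h) :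
    (∀ (n : ℕ) (z : FreeAbelianGroup ((Fin (n + 1) → G) × (Fin (n + 1) → M))),
        z ∈ DBRUsub φ (n + 1) →
          psiLam φ lam n z ∈ imageDgpA (G := G) (M := M) (A := A) (n + 1)) ∧
      (∀ n : ℕ,
        ∃ F : (FreeAbelianGroup ((Fin (n + 1) → G) × (Fin (n + 1) → M)) ⧸
              DBRUsub φ (n + 1)) →+
            (TensorProduct ℤ (CgpG (G := G) (M := M) (n + 1)) A ⧸
              imageDgpA (G := G) (M := M) (A := A) (n + 1)),
          ∀ z, F (QuotientAddGroup.mk z) = QuotientAddGroup.mk (psiLam φ lam n z)) := by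
  have degenerate (n : ℕ) := DBRUsub_le_comap_psiLam (M := M) φ hφ hlam n
  exact ⟨fun n _ hz => degenerate n hz,
    fun n => ⟨QuotientAddGroup.map _ _ (psiLam φ lam n) (degenerate n), fun _ => rfl⟩⟩

end GAlex
end
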